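/- arXiv:1505.02332 — 6 statements merged into one kernel-verified Lean document; each statement's English description precedes it below -/
import Mathlib

section
/- For every polynomial w in the Adini shape function space P_A and every index i with 1 ≤ i ≤ d, the partial derivative ∂w/∂x_i belongs to the subspace Q₁ + span{(x_j − c_j)²·q̂ : 1 ≤ j ≤ d, q̂ ∈ Q₁^i} of ℝ[x_1,…,x_d]. -/
open MvPolynomial MeasureTheory

/-- `Q₁`: the span of the monomials `x^α` with `α i ≤ 1` for every `i`. -/
noncomputable def Q1 (d : ℕ) : Submodule ℝ (MvPolynomial (Fin d) ℝ) :=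
  Submodule.span ℝ {p | ∃ α : Fin d →₀ ℕ, (∀ i, α i ≤ 1) ∧ p = monomial α (1 : ℝ)}

/-- The Adini shape function space `P_A = Q₁ + span{x_i² q : 1 ≤ i ≤ d, q ∈ Q₁}`. -/
noncomputable def PA (d : ℕ) : Submodule ℝ (MvPolynomial (Fin d) ℝ) :=
  Q1 d ⊔ Submodule.span ℝ {p | ∃ i : Fin d, ∃ q ∈ Q1 d, p = X i ^ 2 * q}

/-- `Q₁^i`: elements of `Q₁` of degree 0 in `x_i`. -/
noncomputable def Q1i (d : ℕ) (i : Fin d) : Submodule ℝ (MvPolynomial (Fin d) ℝ) :=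
  Submodule.span ℝ
    {p | ∃ α : Fin d →₀ ℕ, (∀ j, α j ≤ 1) ∧ α i = 0 ∧ p = monomial α (1 : ℝ)}

/-- `S^i = span{((x_j − c_j)² − h_j²) q̂ : 1 ≤ j ≤ d, q̂ ∈ Q₁^i}`. -/
noncomputable def Si (d : ℕ) (c h : Fin d → ℝ) (i : Fin d) :
    Submodule ℝ (MvPolynomial (Fin d) ℝ) :=
  Submodule.span ℝ
    {p | ∃ j : Fin d, ∃ q ∈ Q1i d i, p = ((X j - C (c j)) ^ 2 - C (h j ^ 2)) * q}

/-- The vertices of the `d`-rectangle with centre `c` and half-lengths `h`. -/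
def IsVertex {d : ℕ} (c h : Fin d → ℝ) (a : Fin d → ℝ) : Prop :=
  ∀ i, a i = c i - h i ∨ a i = c i + h i

/-- The `d`-rectangle `K = ∏_i [c_i − h_i, c_i + h_i]`. -/
def box {d : ℕ} (c h : Fin d → ℝ) : Set (Fin d → ℝ) :=
  Set.univ.pi fun i => Set.Icc (c i - h i) (c i + h i)

/-- The iterated partial derivative `∂^α`. -/
noncomputable def pderivPow {d : ℕ} (α : Fin d → ℕ) :
    MvPolynomial (Fin d) ℝ →ₗ[ℝ] MvPolynomial (Fin d) ℝ :=
  (List.ofFn fun i : Fin d =>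
    ((pderiv (R := ℝ) i).toLinearMap :
        Module.End ℝ (MvPolynomial (Fin d) ℝ)) ^ α i).prod

lemma mono_mem_Q1 {d : ℕ} {α : Fin d →₀ ℕ} (hα : ∀ j, α j ≤ 1) :
    monomial α (1 : ℝ) ∈ Q1 d := Submodule.subset_span ⟨α, hα, rfl⟩

/-- The target space. -/
noncomputable def tgt (d : ℕ) (c : Fin d → ℝ) (i : Fin d) :
    Submodule ℝ (MvPolynomial (Fin d) ℝ) :=
  Q1 d ⊔ Submodule.span ℝ {p | ∃ j : Fin d, ∃ q ∈ Q1i d i, p = (X j - C (c j)) ^ 2 * q}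

lemma X_mul_mono_zero {d : ℕ} {γ : Fin d →₀ ℕ} (hγ : ∀ j, γ j ≤ 1) {k : Fin d}
    (hk : γ k = 0) : X k * monomial γ (1 : ℝ) ∈ Q1 d := by
  rw [X, monomial_mul, one_mul]
  refine mono_mem_Q1 fun j => ?_
  by_cases hj : k = j
  · subst hj; simp [hk]
  · simpa [Finsupp.single_apply, hj] using hγ j

lemma X_mul_mono_one {d : ℕ} {γ : Fin d →₀ ℕ} {k : Fin d} (hk : γ k = 1) :
    X k * monomial γ (1 : ℝ) = X k ^ 2 * monomial (γ - Finsupp.single k 1) 1 := by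
  have : monomial γ (1 : ℝ) = X k * monomial (γ - Finsupp.single k 1) 1 := by
    rw [X, monomial_mul, one_mul]
    refine congrArg (fun s => monomial s (1 : ℝ)) (Finsupp.ext fun j => ?_)
    by_cases hj : k = j
    · subst hj; simp [hk]
    · simp [Finsupp.single_apply, hj]
  conv_lhs => rw [this]
  ring

lemma sub_le_one {d : ℕ} {γ : Fin d →₀ ℕ} (hγ : ∀ j, γ j ≤ 1) (k j : Fin d) :
    (γ - Finsupp.single k 1 : Fin d →₀ ℕ) j ≤ 1 := by
  have := hγ j
  rw [Finsupp.tsub_apply]; omega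

lemma sq_step {d : ℕ} (c : Fin d → ℝ) (i : Fin d) {γ : Fin d →₀ ℕ} (hγ : ∀ j, γ j ≤ 1)
    (hi : γ i = 0) (k : Fin d) (hX : X k * monomial γ (1 : ℝ) ∈ tgt d c i) :
    X k ^ 2 * monomial γ (1 : ℝ) ∈ tgt d c i := by
  have e : X k ^ 2 * monomial γ (1 : ℝ) = (X k - C (c k)) ^ 2 * monomial γ (1 : ℝ)
      + (2 * c k) • (X k * monomial γ (1 : ℝ)) - (c k ^ 2) • monomial γ (1 : ℝ) := by
    simp only [smul_eq_C_mul, C_mul, C_pow]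
    have : (C 2 : MvPolynomial (Fin d) ℝ) = 2 := map_ofNat C 2
    rw [this]; ring
  rw [e]
  refine sub_mem (add_mem (Submodule.mem_sup_right (Submodule.subset_span
    ⟨k, _, Submodule.subset_span ⟨γ, hγ, hi, rfl⟩, rfl⟩)) (Submodule.smul_mem _ _ hX))
    (Submodule.smul_mem _ _ (Submodule.mem_sup_left (mono_mem_Q1 hγ)))

lemma sq_mem {d : ℕ} (c : Fin d → ℝ) (i : Fin d) {γ : Fin d →₀ ℕ} (hγ : ∀ j, γ j ≤ 1)
    (hi : γ i = 0) (k : Fin d) : X k ^ 2 * monomial γ (1 : ℝ) ∈ tgt d c i := by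
  refine sq_step c i hγ hi k ?_
  rcases Nat.le_one_iff_eq_zero_or_eq_one.mp (hγ k) with hk | hk
  · exact Submodule.mem_sup_left (X_mul_mono_zero hγ hk)
  · rw [X_mul_mono_one hk]
    refine sq_step c i (sub_le_one hγ k) (by simp [hi]) k
      (Submodule.mem_sup_left (X_mul_mono_zero (sub_le_one hγ k) (by simp [hk])))

lemma sub_self_zero {d : ℕ} {γ : Fin d →₀ ℕ} (hγ : ∀ j, γ j ≤ 1) (i : Fin d) :
    (γ - Finsupp.single i 1 : Fin d →₀ ℕ) i = 0 := by
  have := hγ i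
  rw [Finsupp.tsub_apply, Finsupp.single_eq_same]; omega

lemma pderiv_mono {d : ℕ} (γ : Fin d →₀ ℕ) (i : Fin d) :
    pderiv i (monomial γ (1 : ℝ)) = (γ i : ℝ) • monomial (γ - Finsupp.single i 1) (1 : ℝ) := by
  rw [pderiv_monomial, smul_monomial]; simp

lemma X_mem {d : ℕ} (c : Fin d → ℝ) (i : Fin d) {γ : Fin d →₀ ℕ} (hγ : ∀ j, γ j ≤ 1) :
    X i * monomial γ (1 : ℝ) ∈ tgt d c i := by
  rcases Nat.le_one_iff_eq_zero_or_eq_one.mp (hγ i) with hk | hk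
  · exact Submodule.mem_sup_left (X_mul_mono_zero hγ hk)
  · rw [X_mul_mono_one hk]
    exact sq_mem c i (sub_le_one hγ i) (sub_self_zero hγ i) i

lemma pderiv_sq_mono {d : ℕ} (c : Fin d → ℝ) (i k : Fin d) {γ : Fin d →₀ ℕ}
    (hγ : ∀ j, γ j ≤ 1) : pderiv i (X k ^ 2 * monomial γ (1 : ℝ)) ∈ tgt d c i := by
  rw [Derivation.leibniz, pderiv_mono, smul_eq_mul, mul_smul_comm]
  refine add_mem (Submodule.smul_mem _ _
    (sq_mem c i (sub_le_one hγ i) (sub_self_zero hγ i) k)) ?_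
  by_cases hk : k = i
  · subst hk
    have e : monomial γ (1 : ℝ) • pderiv k (X k ^ 2 : MvPolynomial (Fin d) ℝ)
        = (2 : ℝ) • (X k * monomial γ (1 : ℝ)) := by
      have : (C 2 : MvPolynomial (Fin d) ℝ) = 2 := map_ofNat C 2
      rw [pow_two, Derivation.leibniz, pderiv_X_self, smul_eq_C_mul, this]
      simp only [smul_eq_mul]; ring
    rw [e]
    exact Submodule.smul_mem _ _ (X_mem c k hγ)
  · have e : pderiv i (X k ^ 2 : MvPolynomial (Fin d) ℝ) = 0 := by
      rw [pow_two, Derivation.leibniz, pderiv_X_of_ne (by tauto)]; simp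
    rw [e]; simp

lemma pderiv_Q1 {d : ℕ} (c : Fin d → ℝ) (i : Fin d) {w : MvPolynomial (Fin d) ℝ}
    (hw : w ∈ Q1 d) : pderiv i w ∈ tgt d c i := by
  induction hw using Submodule.span_induction with
  | mem x hx =>
    obtain ⟨α, hα, rfl⟩ := hx
    rw [pderiv_mono]
    exact Submodule.smul_mem _ _ (Submodule.mem_sup_left (mono_mem_Q1 (sub_le_one hα i)))
  | zero => rw [map_zero]; exact zero_mem _
  | add x y _ _ hx hy => rw [map_add]; exact add_mem hx hy
  | smul a x _ hx => rw [Derivation.map_smul]; exact Submodule.smul_mem _ _ hx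

lemma pderiv_sq_Q1 {d : ℕ} (c : Fin d → ℝ) (i k : Fin d) {q : MvPolynomial (Fin d) ℝ}
    (hq : q ∈ Q1 d) : pderiv i (X k ^ 2 * q) ∈ tgt d c i := by
  induction hq using Submodule.span_induction with
  | mem x hx => obtain ⟨α, hα, rfl⟩ := hx; exact pderiv_sq_mono c i k hα
  | zero => rw [mul_zero, map_zero]; exact zero_mem _
  | add x y _ _ hx hy => rw [mul_add, map_add]; exact add_mem hx hy
  | smul a x _ hx =>
    rw [mul_smul_comm, Derivation.map_smul]; exact Submodule.smul_mem _ _ hx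

lemma pderiv_span {d : ℕ} (c : Fin d → ℝ) (i : Fin d) {w : MvPolynomial (Fin d) ℝ}
    (hw : w ∈ Submodule.span ℝ {p | ∃ i : Fin d, ∃ q ∈ Q1 d, p = X i ^ 2 * q}) :
    pderiv i w ∈ tgt d c i := by
  induction hw using Submodule.span_induction with
  | mem x hx => obtain ⟨k, q, hq, rfl⟩ := hx; exact pderiv_sq_Q1 c i k hq
  | zero => rw [map_zero]; exact zero_mem _
  | add x y _ _ hx hy => rw [map_add]; exact add_mem hx hy
  | smul a x _ hx => rw [Derivation.map_smul]; exact Submodule.smul_mem _ _ hx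

lemma pderiv_PA {d : ℕ} (c : Fin d → ℝ) (i : Fin d) {w : MvPolynomial (Fin d) ℝ}
    (hw : w ∈ PA d) : pderiv i w ∈ tgt d c i := by
  unfold PA at hw
  obtain ⟨a, ha, b, hb, rfl⟩ := Submodule.mem_sup.mp hw
  rw [map_add]
  exact add_mem (pderiv_Q1 c i ha) (pderiv_span c i hb)

/-- for every `w ∈ P_A` and every `i`, the partial derivative `∂w/∂x_i`
belongs to `Q₁ + span{(x_j − c_j)² q̂ : 1 ≤ j ≤ d, q̂ ∈ Q₁^i}`. -/
theorem adini_pderiv_mem (d : ℕ) (hd : 1 ≤ d) (c h : Fin d → ℝ) (hh : ∀ i, 0 < h i)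
    (w : MvPolynomial (Fin d) ℝ) (hw : w ∈ PA d) (i : Fin d) :
    pderiv i w ∈
      Q1 d ⊔ Submodule.span ℝ
        {p | ∃ j : Fin d, ∃ q ∈ Q1i d i, p = (X j - C (c j)) ^ 2 * q} := by
  have key := pderiv_PA c i hw
  unfold tgt at key
  exact key
end

section
/- (Lemma 2.1) Let w ∈ P_A, fix i with 1 ≤ i ≤ d, and let q ∈ Q₁ be a polynomial that agrees with ∂w/∂x_i at every vertex of K. Then the residual r = ∂w/∂x_i − q takes equal values on the two faces of K orthogonal to the x_i axis: for every y ∈ ℝ^d, the value of r at the point obtained from y by replacing its i-th coordinate with c_i + h_i equals the value of r at the point obtained from y by replacing its i-th coordinate with c_i − h_i. -/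
open MvPolynomial MeasureTheory

/-- Functions that are affine in each coordinate separately. -/
def MultiAff {d : ℕ} (f : (Fin d → ℝ) → ℝ) : Prop :=
  ∀ (y : Fin d → ℝ) (j : Fin d), ∃ A B : ℝ, ∀ t, f (Function.update y j t) = A + B * t

theorem MultiAff.add' {d : ℕ} {f g : (Fin d → ℝ) → ℝ} (hf : MultiAff f) (hg : MultiAff g) :
    MultiAff (fun y => f y + g y) := by
  intro y j
  obtain ⟨A, B, h1⟩ := hf y j
  obtain ⟨A', B', h2⟩ := hg y j
  exact ⟨A + A', B + B', fun t => by simp only [h1, h2]; ring⟩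

theorem MultiAff.smul' {d : ℕ} {f : (Fin d → ℝ) → ℝ} (r : ℝ) (hf : MultiAff f) :
    MultiAff (fun y => r * f y) := by
  intro y j
  obtain ⟨A, B, h1⟩ := hf y j
  exact ⟨r * A, r * B, fun t => by simp only [h1]; ring⟩

theorem MultiAff.sub' {d : ℕ} {f g : (Fin d → ℝ) → ℝ} (hf : MultiAff f) (hg : MultiAff g) :
    MultiAff (fun y => f y - g y) := by
  have := hf.add' (hg.smul' (-1))
  convert this using 2
  ring

theorem MultiAff.zero' {d : ℕ} : MultiAff (fun _ : Fin d → ℝ => (0 : ℝ)) :=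
  fun _ _ => ⟨0, 0, fun t => by simp⟩

theorem MultiAff.upd {d : ℕ} {f : (Fin d → ℝ) → ℝ} (hf : MultiAff f) (i : Fin d) (s : ℝ) :
    MultiAff (fun y => f (Function.update y i s)) := by
  intro y j
  by_cases hij : j = i
  · subst hij
    exact ⟨f (Function.update y j s), 0, fun t => by simp⟩
  · obtain ⟨A, B, h1⟩ := hf (Function.update y i s) j
    exact ⟨A, B, fun t => by rw [← h1 t]; exact congrArg f (Function.update_comm hij _ _ _)⟩

theorem MultiAff.eq_zero {d : ℕ} {c h : Fin d → ℝ} (hh : ∀ i, 0 < h i)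
    {f : (Fin d → ℝ) → ℝ} (hf : MultiAff f) (hv : ∀ a, IsVertex c h a → f a = 0)
    (y : Fin d → ℝ) : f y = 0 := by
  have key : ∀ (S : Finset (Fin d)) (y : Fin d → ℝ),
      (∀ j, j ∉ S → y j = c j - h j ∨ y j = c j + h j) → f y = 0 := by
    intro S
    induction S using Finset.induction_on with
    | empty => exact fun y hy => hv y fun j => hy j (by simp)
    | insert k S hk ih =>
      intro y hy
      obtain ⟨A, B, hAB⟩ := hf y k
      have h1 : f (Function.update y k (c k - h k)) = 0 := by
        apply ih
        intro j hj
        by_cases hjk : j = k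
        · subst hjk; simp
        · simpa [hjk] using hy j (by simp [hjk, hj])
      have h2 : f (Function.update y k (c k + h k)) = 0 := by
        apply ih
        intro j hj
        by_cases hjk : j = k
        · subst hjk; simp
        · simpa [hjk] using hy j (by simp [hjk, hj])
      have h3 := hAB (y k)
      rw [Function.update_eq_self] at h3
      rw [hAB] at h1 h2
      have hB : B * h k = 0 := by linarith
      have hB0 : B = 0 := (mul_eq_zero.mp hB).resolve_right (hh k).ne'
      subst hB0
      linarith
  exact key Finset.univ y (by simp)

theorem Q1.multiAff {d : ℕ} {q : MvPolynomial (Fin d) ℝ} (hq : q ∈ Q1 d) :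
    MultiAff (fun y => eval y q) := by
  unfold Q1 at hq
  induction hq using Submodule.span_induction with
  | mem p hp =>
    obtain ⟨α, hα, rfl⟩ := hp
    intro y j
    have hev : ∀ t, eval (Function.update y j t) (monomial α (1 : ℝ)) =
        t ^ α j * ∏ k ∈ Finset.univ.erase j, y k ^ α k := by
      intro t
      rw [eval_monomial, Finsupp.prod_fintype _ _ (by simp),
        ← Finset.mul_prod_erase _ _ (Finset.mem_univ j), one_mul, Function.update_self]
      congr 1
      refine Finset.prod_congr rfl fun k hk => ?_
      rw [Function.update_of_ne (Finset.ne_of_mem_erase hk)]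
    have hj := hα j
    rcases (by omega : α j = 0 ∨ α j = 1) with h0 | h0
    · exact ⟨∏ k ∈ Finset.univ.erase j, y k ^ α k, 0, fun t => by simp only [hev, h0]; ring⟩
    · exact ⟨0, ∏ k ∈ Finset.univ.erase j, y k ^ α k, fun t => by simp only [hev, h0]; ring⟩
  | zero => simpa using MultiAff.zero'
  | add p q _ _ hp hq => simpa using hp.add' hq
  | smul r p _ hp => simpa [smul_eval] using hp.smul' r

theorem Q1.pderiv_mem {d : ℕ} {q : MvPolynomial (Fin d) ℝ} (hq : q ∈ Q1 d) (i : Fin d) :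
    pderiv i q ∈ Q1 d := by
  unfold Q1 at hq
  induction hq using Submodule.span_induction with
  | mem p hp =>
    obtain ⟨α, hα, rfl⟩ := hp
    have h1 : pderiv i (monomial α (1 : ℝ)) =
        (α i : ℝ) • monomial (α - Finsupp.single i 1) (1 : ℝ) := by
      rw [pderiv_monomial, smul_monomial]; simp
    rw [h1]
    refine Submodule.smul_mem _ _ (Submodule.subset_span ⟨_, fun k => ?_, rfl⟩)
    exact le_trans (by simp) (hα k)
  | zero => simp
  | add p q _ _ hp hq => simpa using add_mem hp hq
  | smul r p _ hp => simpa using Submodule.smul_mem _ r hp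

theorem Q1.pderiv_indep {d : ℕ} {q : MvPolynomial (Fin d) ℝ} (hq : q ∈ Q1 d) (i : Fin d)
    (y : Fin d → ℝ) (s t : ℝ) :
    eval (Function.update y i s) (pderiv i q) = eval (Function.update y i t) (pderiv i q) := by
  unfold Q1 at hq
  induction hq using Submodule.span_induction with
  | mem p hp =>
    obtain ⟨α, hα, rfl⟩ := hp
    rw [pderiv_monomial, eval_monomial, eval_monomial, Finsupp.prod_fintype _ _ (by simp),
      Finsupp.prod_fintype _ _ (by simp)]
    congr 1
    refine Finset.prod_congr rfl fun k _ => ?_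
    by_cases hk : k = i
    · subst hk
      have h0 : (α - Finsupp.single k 1 : Fin d →₀ ℕ) k = 0 := by
        have := hα k
        simp; omega
      rw [h0]; simp
    · rw [Function.update_of_ne hk, Function.update_of_ne hk]
  | zero => simp
  | add p q _ _ hp hq => simp only [map_add, hp, hq]
  | smul r p _ hp => simp only [Derivation.map_smul, smul_eval, hp]

theorem PA.multiAff {d : ℕ} {w : MvPolynomial (Fin d) ℝ} (hw : w ∈ PA d) (i : Fin d)
    (s t : ℝ) : MultiAff (fun y => eval (Function.update y i s) (pderiv i w) -
      eval (Function.update y i t) (pderiv i w)) := by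
  obtain ⟨u, hu, v, hv, rfl⟩ := Submodule.mem_sup.mp hw
  have hU : MultiAff (fun y => eval (Function.update y i s) (pderiv i u) -
      eval (Function.update y i t) (pderiv i u)) :=
    ((Q1.multiAff (Q1.pderiv_mem hu i)).upd i s).sub' ((Q1.multiAff (Q1.pderiv_mem hu i)).upd i t)
  have hV : MultiAff (fun y => eval (Function.update y i s) (pderiv i v) -
      eval (Function.update y i t) (pderiv i v)) := by
    clear hw
    induction hv using Submodule.span_induction with
    | mem p hp =>
      obtain ⟨j, q, hq, rfl⟩ := hp
      by_cases hj : j = i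
      · subst hj
        have hq1 := Q1.multiAff hq
        have hq2 := Q1.multiAff (Q1.pderiv_mem hq j)
        have := (((hq1.upd j s).smul' (2 * s)).add' ((hq2.upd j s).smul' (s ^ 2))).sub'
          (((hq1.upd j t).smul' (2 * t)).add' ((hq2.upd j t).smul' (t ^ 2)))
        convert this using 2
        simp [Derivation.leibniz, Derivation.leibniz_pow, pderiv_X_self]
        ring
      · convert MultiAff.zero' (d := d) using 2 with y
        have hX : pderiv i (X j : MvPolynomial (Fin d) ℝ) = 0 :=
          pderiv_X_of_ne hj
        simp only [Derivation.leibniz, Derivation.leibniz_pow, hX]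
        simp [hj, Q1.pderiv_indep hq i y s t]
    | zero => simpa using MultiAff.zero'
    | add p q _ _ hp hq =>
      convert hp.add' hq using 2
      simp only [map_add]; ring
    | smul r p _ hp =>
      convert hp.smul' r using 2
      simp only [Derivation.map_smul, smul_eval]; ring
  convert hU.add' hV using 2
  simp only [map_add]; ring

/-- Lemma 2.1: for `w ∈ P_A` and `q ∈ Q₁` the vertex interpolant of
`∂w/∂x_i`, the residual `∂w/∂x_i − q` takes equal values on the two faces of `K`
orthogonal to the `x_i` axis. -/
theorem adini_residual_equal_on_faces (d : ℕ) (hd : 1 ≤ d)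
    (c h : Fin d → ℝ) (hh : ∀ i, 0 < h i)
    (w : MvPolynomial (Fin d) ℝ) (hw : w ∈ PA d) (i : Fin d)
    (q : MvPolynomial (Fin d) ℝ) (hq : q ∈ Q1 d)
    (hagree : ∀ a : Fin d → ℝ, IsVertex c h a → eval a q = eval a (pderiv i w)) :
    ∀ y : Fin d → ℝ,
      eval (Function.update y i (c i + h i)) (pderiv i w - q) =
        eval (Function.update y i (c i - h i)) (pderiv i w - q) := by
  intro y
  have hM := (PA.multiAff hw i (c i + h i) (c i - h i)).sub'
    (((Q1.multiAff hq).upd i (c i + h i)).sub' ((Q1.multiAff hq).upd i (c i - h i)))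
  have h0 := hM.eq_zero (c := c) hh (fun a ha => by
    have hp : IsVertex c h (Function.update a i (c i + h i)) := by
      intro k
      by_cases hk : k = i
      · subst hk; simp
      · simpa [hk] using ha k
    have hm : IsVertex c h (Function.update a i (c i - h i)) := by
      intro k
      by_cases hk : k = i
      · subst hk; simp
      · simpa [hk] using ha k
    simp only [hagree _ hp, hagree _ hm]; ring) y
  simp only [map_sub]
  linarith
end

section
/- (Unisolvence of the Adini element) If a polynomial p ∈ P_A satisfies p(a) = 0 and ∇p(a) = 0 (i.e. ∂p/∂x_k(a) = 0 for all 1 ≤ k ≤ d) at every vertex a of K, then p = 0. Consequently, an element of P_A is uniquely determined by its values and the values of its gradient at the 2^d vertices of K. -/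
open MvPolynomial MeasureTheory

/-- The bubble `(x_i - c_i)^2 - h_i^2`. -/
noncomputable def bub {d : ℕ} (c h : Fin d → ℝ) (i : Fin d) : MvPolynomial (Fin d) ℝ :=
  (X i - C (c i)) ^ 2 - C (h i ^ 2)

theorem Q1_mono {d : ℕ} (α : Fin d →₀ ℕ) (hα : ∀ i, α i ≤ 1) :
    (monomial α (1 : ℝ)) ∈ Q1 d :=
  Submodule.subset_span ⟨α, hα, rfl⟩

theorem Q1_degree {d : ℕ} {q : MvPolynomial (Fin d) ℝ} (hq : q ∈ Q1 d) (i : Fin d) :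
    q.degreeOf i ≤ 1 := by
  have hle : Q1 d ≤ restrictDegree (Fin d) ℝ 1 := by
    refine Submodule.span_le.2 ?_
    rintro p ⟨α, hα, rfl⟩
    rw [SetLike.mem_coe, mem_restrictDegree]
    intro s hs j
    have := support_monomial_subset hs
    rw [Finset.mem_singleton] at this
    rw [this]
    exact hα j
  have h2 := (mem_restrictDegree _ _ _).1 (hle hq)
  rw [degreeOf_le_iff]
  intro s hs
  exact h2 s hs i

theorem Q1_unisolvent {d : ℕ} (c h : Fin d → ℝ) (hh : ∀ i, 0 < h i)
    {q : MvPolynomial (Fin d) ℝ} (hq : q ∈ Q1 d)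
    (hv : ∀ a : Fin d → ℝ, IsVertex c h a → eval a q = 0) : q = 0 := by
  classical
  refine eq_zero_of_eval_zero_at_prod_finset q (fun i => {c i - h i, c i + h i}) ?_ ?_
  · intro i
    have hne : c i - h i ≠ c i + h i := by
      have := hh i
      intro h'
      linarith
    rw [Finset.card_pair hne]
    have := Q1_degree hq i
    omega
  · intro a ha
    refine hv a (fun i => ?_)
    simpa using ha i

theorem X_mul_Q1 {d : ℕ} (c h : Fin d → ℝ) (i : Fin d)
    {q : MvPolynomial (Fin d) ℝ} (hq : q ∈ Q1 d) :
    ∃ q' ∈ Q1 d, ∃ m ∈ Q1 d, X i * q = q' + bub c h i * m := by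
  induction hq using Submodule.span_induction with
  | mem p hp =>
    obtain ⟨α, hα, rfl⟩ := hp
    have hX : ∀ β : Fin d →₀ ℕ, (X i : MvPolynomial (Fin d) ℝ) * monomial β 1 =
        monomial (Finsupp.single i 1 + β) 1 := by
      intro β
      rw [X, monomial_mul, one_mul]
    rcases Nat.eq_zero_or_pos (α i) with h0 | h0
    · refine ⟨_, Q1_mono (Finsupp.single i 1 + α) ?_, 0, zero_mem _, ?_⟩
      · intro j
        by_cases hj : i = j
        · subst hj
          simp [h0]
        · simpa [Finsupp.single_apply, hj] using hα j
      · rw [hX]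
        simp
    · have hle : Finsupp.single i 1 ≤ α := by
        rw [Finsupp.single_le_iff]
        exact h0
      obtain ⟨β, rfl⟩ := exists_add_of_le hle
      have hβ : ∀ j, β j ≤ 1 := fun j => le_trans (by simp) (hα j)
      refine ⟨(2 * c i) • monomial (Finsupp.single i 1 + β) 1 +
        (h i ^ 2 - c i ^ 2) • monomial β 1,
        add_mem (Submodule.smul_mem _ _ (Q1_mono _ hα)) (Submodule.smul_mem _ _ (Q1_mono _ hβ)),
        monomial β 1, Q1_mono _ hβ, ?_⟩
      rw [← hX, smul_eq_C_mul, smul_eq_C_mul, bub]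
      simp only [C_mul, C_sub, C_pow, map_ofNat]
      ring
  | zero => exact ⟨0, zero_mem _, 0, zero_mem _, by simp⟩
  | add x y _ _ hx hy =>
    obtain ⟨a, ha, b, hb, e⟩ := hx
    obtain ⟨a', ha', b', hb', e'⟩ := hy
    exact ⟨a + a', add_mem ha ha', b + b', add_mem hb hb', by rw [mul_add, e, e']; ring⟩
  | smul r x _ hx =>
    obtain ⟨a, ha, b, hb, e⟩ := hx
    exact ⟨r • a, Submodule.smul_mem _ _ ha, r • b, Submodule.smul_mem _ _ hb, by
      rw [mul_smul_comm, e, smul_add, mul_smul_comm]⟩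

theorem PA_repr {d : ℕ} (c h : Fin d → ℝ) {p : MvPolynomial (Fin d) ℝ} (hp : p ∈ PA d) :
    ∃ q₀ ∈ Q1 d, ∃ q : Fin d → MvPolynomial (Fin d) ℝ, (∀ i, q i ∈ Q1 d) ∧
      p = q₀ + ∑ i, bub c h i * q i := by
  classical
  obtain ⟨u, hu, v, hv, rfl⟩ := Submodule.mem_sup.1 hp
  clear hp
  suffices H : ∃ q₀ ∈ Q1 d, ∃ q : Fin d → MvPolynomial (Fin d) ℝ, (∀ i, q i ∈ Q1 d) ∧
      v = q₀ + ∑ i, bub c h i * q i by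
    obtain ⟨q₀, h₀, q, hq, e⟩ := H
    exact ⟨u + q₀, add_mem hu h₀, q, hq, by rw [e, add_assoc]⟩
  induction hv using Submodule.span_induction with
  | mem p hp =>
    obtain ⟨i, q, hq, rfl⟩ := hp
    obtain ⟨q', hq', m, hm, e⟩ := X_mul_Q1 c h i hq
    refine ⟨(2 * c i) • q' + (h i ^ 2 - c i ^ 2) • q,
      add_mem (Submodule.smul_mem _ _ hq') (Submodule.smul_mem _ _ hq),
      Pi.single i (q + (2 * c i) • m), ?_, ?_⟩
    · intro j
      by_cases hj : j = i
      · subst hj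
        rw [Pi.single_eq_same]
        exact add_mem hq (Submodule.smul_mem _ _ hm)
      · rw [Pi.single_eq_of_ne hj]
        exact zero_mem _
    · rw [Finset.sum_eq_single i (fun j _ hj => by rw [Pi.single_eq_of_ne hj, mul_zero])
        (fun hi => absurd (Finset.mem_univ i) hi), Pi.single_eq_same]
      have e2 : X i ^ 2 * q = bub c h i * q + C (2 * c i) * (X i * q) +
          C (h i ^ 2 - c i ^ 2) * q := by
        rw [bub]
        simp only [C_mul, C_sub, C_pow, map_ofNat]
        ring
      rw [e2, e, smul_eq_C_mul, smul_eq_C_mul, smul_eq_C_mul]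
      ring
  | zero => exact ⟨0, zero_mem _, 0, fun _ => zero_mem _, by simp⟩
  | add x y _ _ hx hy =>
    obtain ⟨a, ha, b, hb, e⟩ := hx
    obtain ⟨a', ha', b', hb', e'⟩ := hy
    refine ⟨a + a', add_mem ha ha', b + b', fun i => add_mem (hb i) (hb' i), ?_⟩
    rw [e, e']
    simp only [Pi.add_apply, mul_add, Finset.sum_add_distrib]
    ring
  | smul r x _ hx =>
    obtain ⟨a, ha, b, hb, e⟩ := hx
    refine ⟨r • a, Submodule.smul_mem _ _ ha, r • b, fun i => Submodule.smul_mem _ _ (hb i), ?_⟩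
    rw [e]
    simp only [Pi.smul_apply, mul_smul_comm, smul_add, Finset.smul_sum]

theorem bub_eval {d : ℕ} (c h : Fin d → ℝ) (i : Fin d) (a : Fin d → ℝ)
    (ha : IsVertex c h a) : eval a (bub c h i) = 0 := by
  simp only [bub, map_sub, map_pow, eval_X, eval_C]
  rcases ha i with e | e <;> rw [e] <;> ring

theorem adini_zero {d : ℕ} (c h : Fin d → ℝ) (hh : ∀ i, 0 < h i)
    (p : MvPolynomial (Fin d) ℝ) (hp : p ∈ PA d)
    (H : ∀ a : Fin d → ℝ, IsVertex c h a →
        eval a p = 0 ∧ ∀ k : Fin d, eval a (pderiv k p) = 0) : p = 0 := by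
  classical
  obtain ⟨q₀, h₀, q, hq, rfl⟩ := PA_repr c h hp
  have z₀ : q₀ = 0 := by
    refine Q1_unisolvent c h hh h₀ (fun a ha => ?_)
    have := (H a ha).1
    simpa [bub_eval c h _ a ha] using this
  subst z₀
  have z : ∀ k, q k = 0 := by
    intro k
    refine Q1_unisolvent c h hh (hq k) (fun a ha => ?_)
    have h1 := (H a ha).2 k
    rw [zero_add, map_sum, map_sum, Finset.sum_eq_single k] at h1
    · rw [pderiv_mul, map_add, map_mul, map_mul, bub_eval c h _ a ha, zero_mul, add_zero] at h1
      refine (mul_eq_zero.1 h1).resolve_left ?_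
      have hb : eval a (pderiv k (bub c h k)) = 2 * (a k - c k) := by
        simp [bub, pderiv_pow]
      rw [hb]
      have := hh k
      rcases ha k with e | e <;> rw [e] <;> intro h' <;> linarith
    · intro j _ hj
      have hb : pderiv k (bub c h j) = 0 := by
        simp [bub, pderiv_pow, pderiv_X_of_ne hj]
      rw [pderiv_mul, hb, zero_mul, zero_add, map_mul, bub_eval c h _ a ha, zero_mul]
    · intro hk
      exact absurd (Finset.mem_univ k) hk
  simp [z]

/-- unisolvence of the Adini element: a polynomial `p ∈ P_A` whose value
and gradient vanish at every vertex of `K` is zero; consequently, an element of `P_A`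
is uniquely determined by the values of itself and of its gradient at the vertices. -/
theorem adini_unisolvence (d : ℕ) (hd : 1 ≤ d) (c h : Fin d → ℝ) (hh : ∀ i, 0 < h i) :
    (∀ p ∈ PA d,
      (∀ a : Fin d → ℝ, IsVertex c h a →
        eval a p = 0 ∧ ∀ k : Fin d, eval a (pderiv k p) = 0) → p = 0) ∧
    (∀ p₁ ∈ PA d, ∀ p₂ ∈ PA d,
      (∀ a : Fin d → ℝ, IsVertex c h a →
        eval a p₁ = eval a p₂ ∧ ∀ k : Fin d, eval a (pderiv k p₁) = eval a (pderiv k p₂)) →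
      p₁ = p₂) := by
  refine ⟨fun p hp H => adini_zero c h hh p hp H, fun p₁ h₁ p₂ h₂ H => ?_⟩
  refine sub_eq_zero.1 (adini_zero c h hh (p₁ - p₂) (sub_mem h₁ h₂) (fun a ha => ⟨?_, fun k => ?_⟩))
  · rw [map_sub, (H a ha).1, sub_self]
  · rw [map_sub, map_sub, (H a ha).2 k, sub_self]
end

section
/- For every polynomial v in the Adini shape function space P_A the following hold: (1) for each i with 1 ≤ i ≤ d, the second derivative ∂²v/∂x_i² belongs to Q₁; (2) for each pair i ≠ j, the mixed second derivative ∂²v/∂x_i∂x_j belongs to span{p·q̃ : p ∈ {1, x_i, x_j}, q̃ ∈ Q₁^{i,j}} + span{x_k²·q̃ : 1 ≤ k ≤ d, q̃ ∈ Q₁^{i,j}}. -/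
open MvPolynomial MeasureTheory

/-- `Q₁^{i,j}`: elements of `Q₁` of degree 0 in both `x_i` and `x_j`. -/
noncomputable def Q1ij (d : ℕ) (i j : Fin d) : Submodule ℝ (MvPolynomial (Fin d) ℝ) :=
  Submodule.span ℝ
    {p | ∃ α : Fin d →₀ ℕ, (∀ k, α k ≤ 1) ∧ α i = 0 ∧ α j = 0 ∧ p = monomial α (1 : ℝ)}

theorem adini_PA_induction {d : ℕ} (T : Submodule ℝ (MvPolynomial (Fin d) ℝ))
    (L : MvPolynomial (Fin d) ℝ →ₗ[ℝ] MvPolynomial (Fin d) ℝ)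
    (h1 : ∀ β : Fin d →₀ ℕ, (∀ t, β t ≤ 1) → L (monomial β 1) ∈ T)
    (h2 : ∀ (k : Fin d) (β : Fin d →₀ ℕ), (∀ t, β t ≤ 1) →
      L (monomial (Finsupp.single k 2 + β) 1) ∈ T)
    (v : MvPolynomial (Fin d) ℝ) (hv : v ∈ PA d) : L v ∈ T := by
  have key : PA d ≤ T.comap L := by
    refine sup_le (Submodule.span_le.2 ?_) (Submodule.span_le.2 ?_)
    · rintro _ ⟨β, hβ, rfl⟩
      exact h1 β hβ
    · rintro _ ⟨k, q, hq, rfl⟩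
      have : Q1 d ≤ (T.comap L).comap (LinearMap.mulLeft ℝ (X k ^ 2)) := by
        refine Submodule.span_le.2 ?_
        rintro _ ⟨β, hβ, rfl⟩
        have := h2 k β hβ
        simpa [X_pow_eq_monomial, monomial_mul] using this
      exact this hq
  exact key hv

theorem adini_monomial_mem {d : ℕ} (T : Submodule ℝ (MvPolynomial (Fin d) ℝ))
    (γ : Fin d →₀ ℕ) (c : ℝ) (h : monomial γ (1 : ℝ) ∈ T) : monomial γ c ∈ T := by
  have := T.smul_mem c h
  simpa [smul_monomial] using this

theorem adini_monomial_mem' {d : ℕ} (T : Submodule ℝ (MvPolynomial (Fin d) ℝ))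
    (γ : Fin d →₀ ℕ) (c : ℝ) (h : c ≠ 0 → monomial γ (1 : ℝ) ∈ T) : monomial γ c ∈ T := by
  by_cases hc : c = 0
  · simp [hc]
  · exact adini_monomial_mem T γ c (h hc)

set_option maxHeartbeats 1000000 in
/-- for every `v ∈ P_A`, (1) `∂²v/∂x_i² ∈ Q₁` for every `i`, and
(2) for `i ≠ j`, `∂²v/∂x_i∂x_j ∈ span{p q̃ : p ∈ {1, x_i, x_j}, q̃ ∈ Q₁^{i,j}}
+ span{x_k² q̃ : 1 ≤ k ≤ d, q̃ ∈ Q₁^{i,j}}`. -/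
theorem adini_second_derivatives (d : ℕ) (hd : 1 ≤ d) (c h : Fin d → ℝ)
    (hh : ∀ i, 0 < h i) (v : MvPolynomial (Fin d) ℝ) (hv : v ∈ PA d) :
    (∀ i : Fin d, pderiv i (pderiv i v) ∈ Q1 d) ∧
    (∀ i j : Fin d, i ≠ j →
      pderiv i (pderiv j v) ∈
        Submodule.span ℝ
            {r | ∃ p ∈ ({1, X i, X j} : Set (MvPolynomial (Fin d) ℝ)),
              ∃ q ∈ Q1ij d i j, r = p * q} ⊔
          Submodule.span ℝ
            {r | ∃ k : Fin d, ∃ q ∈ Q1ij d i j, r = X k ^ 2 * q}) := by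
  constructor
  · intro i
    refine adini_PA_induction (Q1 d)
      ((pderiv (R := ℝ) i).toLinearMap ∘ₗ (pderiv (R := ℝ) i).toLinearMap) ?_ ?_ v hv
    · intro β hβ
      simp only [LinearMap.comp_apply, Derivation.coeFn_coe, pderiv_monomial]
      refine adini_monomial_mem' _ _ _ fun hc => ?_
      refine Submodule.subset_span ⟨_, fun t => ?_, rfl⟩
      have := hβ t
      simp only [Finsupp.tsub_apply]
      omega
    · intro k β hβ
      simp only [LinearMap.comp_apply, Derivation.coeFn_coe, pderiv_monomial]
      refine adini_monomial_mem' _ _ _ fun hc => ?_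
      refine Submodule.subset_span ⟨_, fun t => ?_, rfl⟩
      have h1 := hβ t
      have h2 := hβ i
      have hc2 := right_ne_zero_of_mul hc
      rw [Nat.cast_ne_zero] at hc2
      simp only [Finsupp.tsub_apply, Finsupp.add_apply, Finsupp.single_apply] at hc2 ⊢
      by_cases hk : k = i
      · subst hk
        split_ifs <;> omega
      · simp [hk] at hc2
        omega
  · intro i j hij
    set T := Submodule.span ℝ
            {r | ∃ p ∈ ({1, X i, X j} : Set (MvPolynomial (Fin d) ℝ)),
              ∃ q ∈ Q1ij d i j, r = p * q} ⊔
          Submodule.span ℝ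
            {r | ∃ k : Fin d, ∃ q ∈ Q1ij d i j, r = X k ^ 2 * q} with hT
    have hq : ∀ γ : Fin d →₀ ℕ, (∀ t, γ t ≤ 1) → γ i = 0 → γ j = 0 →
        monomial γ (1 : ℝ) ∈ Q1ij d i j := fun γ h1 h2 h3 =>
      Submodule.subset_span ⟨γ, h1, h2, h3, rfl⟩
    have m0 : ∀ γ : Fin d →₀ ℕ, monomial γ (1 : ℝ) ∈ Q1ij d i j → monomial γ (1 : ℝ) ∈ T :=
      fun γ h => Submodule.mem_sup_left (Submodule.subset_span ⟨1, by simp, _, h, by simp⟩)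
    have mi : ∀ γ : Fin d →₀ ℕ, monomial γ (1 : ℝ) ∈ Q1ij d i j →
        monomial (Finsupp.single i 1 + γ) (1 : ℝ) ∈ T :=
      fun γ h => Submodule.mem_sup_left (Submodule.subset_span
        ⟨X i, by simp, _, h, by simp [X, monomial_mul]⟩)
    have mj : ∀ γ : Fin d →₀ ℕ, monomial γ (1 : ℝ) ∈ Q1ij d i j →
        monomial (Finsupp.single j 1 + γ) (1 : ℝ) ∈ T :=
      fun γ h => Submodule.mem_sup_left (Submodule.subset_span
        ⟨X j, by simp, _, h, by simp [X, monomial_mul]⟩)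
    have mk : ∀ (k : Fin d) (γ : Fin d →₀ ℕ), monomial γ (1 : ℝ) ∈ Q1ij d i j →
        monomial (Finsupp.single k 2 + γ) (1 : ℝ) ∈ T :=
      fun k γ h => Submodule.mem_sup_right (Submodule.subset_span
        ⟨k, _, h, by simp [X_pow_eq_monomial, monomial_mul]⟩)
    have hji : j ≠ i := hij.symm
    refine adini_PA_induction T
      ((pderiv (R := ℝ) i).toLinearMap ∘ₗ (pderiv (R := ℝ) j).toLinearMap) ?_ ?_ v hv
    · intro β hβ
      simp only [LinearMap.comp_apply, Derivation.coeFn_coe, pderiv_monomial]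
      refine adini_monomial_mem' _ _ _ fun hc => ?_
      refine m0 _ (hq _ (fun t => ?_) ?_ ?_)
      · have := hβ t
        simp only [Finsupp.tsub_apply]
        omega
      · have := hβ i
        simp [hji]
        omega
      · have := hβ j
        simp [hij]
        omega
    · intro k β hβ
      simp only [LinearMap.comp_apply, Derivation.coeFn_coe, pderiv_monomial]
      refine adini_monomial_mem' _ _ _ fun hc => ?_
      have hc2 := right_ne_zero_of_mul hc
      have hc1 := right_ne_zero_of_mul (left_ne_zero_of_mul hc)
      rw [Nat.cast_ne_zero] at hc1 hc2
      simp only [Finsupp.tsub_apply, Finsupp.add_apply, Finsupp.single_apply, hji,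
        if_false] at hc1 hc2
      have bi := hβ i
      have bj := hβ j
      have hγ : monomial ((β.erase i).erase j) (1 : ℝ) ∈ Q1ij d i j := by
        refine hq _ (fun t => ?_) ?_ ?_
        · have := hβ t
          simp only [Finsupp.erase_apply]
          split_ifs <;> omega
        · simp [Finsupp.erase_apply]
        · simp [Finsupp.erase_apply]
      by_cases hki : k = i
      · subst hki
        simp only [hij, if_false] at hc1
        by_cases h0 : β k = 0
        · convert mi _ hγ using 3
          ext t
          simp only [Finsupp.tsub_apply, Finsupp.add_apply, Finsupp.single_apply,
            Finsupp.erase_apply]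
          clear hc hγ mk mj mi m0 hq hv hβ
          clear hT T
          grind
        · convert mk k _ hγ using 3
          ext t
          simp only [Finsupp.tsub_apply, Finsupp.add_apply, Finsupp.single_apply,
            Finsupp.erase_apply]
          clear hc hγ mk mj mi m0 hq hv hβ
          clear hT T
          grind
      · simp only [hki, if_false] at hc2
        by_cases hkj : k = j
        · subst hkj
          by_cases h0 : β k = 0
          · convert mj _ hγ using 3
            ext t
            simp only [Finsupp.tsub_apply, Finsupp.add_apply, Finsupp.single_apply,
              Finsupp.erase_apply]
            clear hc hγ mk mj mi m0 hq hv hβ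
            clear hT T
            grind
          · convert mk k _ hγ using 3
            ext t
            simp only [Finsupp.tsub_apply, Finsupp.add_apply, Finsupp.single_apply,
              Finsupp.erase_apply]
            clear hc hγ mk mj mi m0 hq hv hβ
            clear hT T
            grind
        · simp only [hkj, if_false] at hc1
          convert mk k _ hγ using 3
          ext t
          simp only [Finsupp.tsub_apply, Finsupp.add_apply, Finsupp.single_apply,
            Finsupp.erase_apply]
          clear hc hγ mk mj mi m0 hq hv hβ
          clear hT T
          grind
end

section
/- Let w ∈ P_A and let i ≠ j be indices in {1,…,d}. Let α be the multi-index with α_i = 1, α_j = 2, and α_k = 1 for all k ∉ {i,j}; then ∂^α w belongs to span{1, x_j}. Let β be the multi-index with β_i = 1, β_j = 3, and β_k = 1 for all k ∉ {i,j}; then ∂^β w is a constant polynomial. -/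
open MvPolynomial MeasureTheory

/-- The exponents allowed to occur in an element of `P_A`. -/
def adiniExps (d : ℕ) : Set (Fin d →₀ ℕ) :=
  {s | ∃ f : Fin d → ℕ, (∀ k, f k ≤ 1) ∧
    ((∀ k, s k = f k) ∨ ∃ i, ∀ k, s k = f k + if k = i then 2 else 0)}

lemma PA_coeff {d : ℕ} {w : MvPolynomial (Fin d) ℝ} (hw : w ∈ PA d) (s : Fin d →₀ ℕ)
    (hs : coeff s w ≠ 0) : s ∈ adiniExps d := by
  have hQ : ∀ q ∈ Q1 d, q ∈ restrictSupport ℝ {s : Fin d →₀ ℕ | ∀ k, s k ≤ 1} := by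
    intro q hq
    refine (Submodule.span_le.2 ?_ : Q1 d ≤ _) hq
    rintro p ⟨α, hα, rfl⟩
    exact (monomial_mem_restrictSupport ℝ).2 (Or.inl hα)
  have hP : PA d ≤ restrictSupport ℝ (adiniExps d) := by
    refine sup_le ?_ (Submodule.span_le.2 ?_)
    · intro q hq
      have h1 := (mem_restrictSupport_iff ℝ).1 (hQ q hq)
      refine (mem_restrictSupport_iff ℝ).2 fun t ht => ?_
      exact ⟨t, h1 ht, Or.inl fun _ => rfl⟩
    · rintro p ⟨i, q, hq, rfl⟩
      have h1 := (mem_restrictSupport_iff ℝ).1 (hQ q hq)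
      refine (mem_restrictSupport_iff ℝ).2 fun t ht => ?_
      have ht' : coeff t (X i ^ 2 * q) ≠ 0 := by simpa using ht
      rw [X_pow_eq_monomial, coeff_monomial_mul'] at ht'
      split_ifs at ht' with hle
      · have h2 : coeff (t - Finsupp.single i 2) q ≠ 0 := by simpa using ht'
        have h3 := h1 (show t - Finsupp.single i 2 ∈ (q.support : Set _) by simpa using h2)
        refine ⟨fun k => (t - Finsupp.single i 2 : Fin d →₀ ℕ) k, h3, Or.inr ⟨i, fun k => ?_⟩⟩
        have h4 := hle k
        simp only [Finsupp.tsub_apply]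
        rw [Finsupp.single_apply] at h4 ⊢
        by_cases hk : k = i
        · subst hk; simp at h4 ⊢; omega
        · simp [hk, Ne.symm hk]
      · exact absurd rfl ht'
  exact (mem_restrictSupport_iff ℝ).1 (hP hw) (by simpa using hs)

lemma coeff_pderiv_pow_ne {d : ℕ} (i : Fin d) (n : ℕ) (p : MvPolynomial (Fin d) ℝ)
    (m : Fin d →₀ ℕ)
    (h : coeff m ((((pderiv (R := ℝ) i).toLinearMap :
        Module.End ℝ (MvPolynomial (Fin d) ℝ)) ^ n) p) ≠ 0) :
    coeff (m + Finsupp.single i n) p ≠ 0 := by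
  induction n generalizing m with
  | zero => simpa using h
  | succ n ih =>
    rw [pow_succ', Module.End.mul_apply] at h
    change coeff m (pderiv i _) ≠ 0 at h
    rw [coeff_pderiv] at h
    have h1 := ih (m + Finsupp.single i 1) (by
      intro h0; apply h; simp [h0])
    rwa [add_assoc, ← Finsupp.single_add, add_comm 1 n] at h1

lemma coeff_list_ne {d : ℕ} (α : Fin d → ℕ) (l : List (Fin d)) (p : MvPolynomial (Fin d) ℝ)
    (m : Fin d →₀ ℕ)
    (h : coeff m ((l.map fun i : Fin d => ((pderiv (R := ℝ) i).toLinearMap :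
        Module.End ℝ (MvPolynomial (Fin d) ℝ)) ^ α i).prod p) ≠ 0) :
    coeff (m + (l.map fun i => Finsupp.single i (α i)).sum) p ≠ 0 := by
  induction l generalizing m with
  | nil => simpa using h
  | cons a l ih =>
    rw [List.map_cons, List.prod_cons, Module.End.mul_apply] at h
    have h1 := ih _ (coeff_pderiv_pow_ne a _ _ _ h)
    rwa [List.map_cons, List.sum_cons, ← add_assoc]

lemma coeff_pderivPow_ne {d : ℕ} (α : Fin d → ℕ) (p : MvPolynomial (Fin d) ℝ)
    (m : Fin d →₀ ℕ) (h : coeff m (pderivPow α p) ≠ 0) :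
    coeff (m + Finsupp.equivFunOnFinite.symm α) p ≠ 0 := by
  rw [pderivPow, List.ofFn_eq_map] at h
  have h1 := coeff_list_ne α _ p m h
  convert h1 using 3
  rw [← List.ofFn_eq_map, List.sum_ofFn]
  ext k
  simp [Finsupp.finsetSum_apply, Finsupp.single_apply]

/-- Which exponents survive differentiation. -/
lemma exps_survive {d : ℕ} {w : MvPolynomial (Fin d) ℝ} (hw : w ∈ PA d) (j : Fin d) (n : ℕ)
    (hn : 2 ≤ n) (m : Fin d →₀ ℕ)
    (h : coeff m (pderivPow (fun k => if k = j then n else 1) w) ≠ 0) :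
    (∀ k, k ≠ j → m k = 0) ∧ m j + n ≤ 3 := by
  obtain ⟨f, hf, h1⟩ := PA_coeff hw _ (coeff_pderivPow_ne _ _ _ h)
  simp only [Finsupp.add_apply, Finsupp.equivFunOnFinite_symm_apply_apply] at h1
  have hj := hf j
  rcases h1 with h1 | ⟨i, h1⟩
  · have := h1 j
    simp at this
    omega
  · have h2 := h1 j
    have hji : j = i := by
      by_contra hne
      simp [hne] at h2
      omega
    subst hji
    simp at h2
    refine ⟨fun k hk => ?_, by omega⟩
    have h3 := h1 k
    have := hf k
    simp [hk] at h3
    omega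

/-- for `w ∈ P_A` and `i ≠ j`, the derivative `∂^α w` with `α_i = 1`,
`α_j = 2`, `α_k = 1` for `k ∉ {i,j}` lies in `span{1, x_j}`, and the derivative
`∂^β w` with `β_i = 1`, `β_j = 3`, `β_k = 1` for `k ∉ {i,j}` is constant. -/
theorem adini_high_order_derivatives (d : ℕ) (hd : 1 ≤ d)
    (w : MvPolynomial (Fin d) ℝ) (hw : w ∈ PA d) (i j : Fin d) (hij : i ≠ j) :
    pderivPow (fun k => if k = j then 2 else 1) w ∈
      Submodule.span ℝ ({1, X j} : Set (MvPolynomial (Fin d) ℝ)) ∧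
    ∃ r : ℝ, pderivPow (fun k => if k = j then 3 else 1) w = C r := by
  constructor
  · rw [as_sum (pderivPow (fun k => if k = j then 2 else 1) w)]
    refine Submodule.sum_mem _ fun m hm => ?_
    obtain ⟨h1, h2⟩ := exps_survive hw j 2 le_rfl m (by simpa using hm)
    have hm' : m = Finsupp.single j (m j) := by
      ext k
      by_cases hk : k = j
      · subst hk; simp
      · simp [h1 k hk, Finsupp.single_apply, Ne.symm hk]
    generalize coeff m (pderivPow (fun k => if k = j then 2 else 1) w) = c
    have h3 : m j = 0 ∨ m j = 1 := by omega
    have h4 : monomial m c = c • monomial m (1 : ℝ) := by simp [smul_monomial]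
    rw [h4]
    refine Submodule.smul_mem _ _ (Submodule.subset_span ?_)
    rcases h3 with h3 | h3
    · left; rw [hm', h3]; simp
    · right; rw [hm', h3]; rfl
  · refine ⟨coeff 0 (pderivPow (fun k => if k = j then 3 else 1) w), ?_⟩
    ext m
    rw [coeff_C]
    split_ifs with h0
    · rw [h0]
    · by_contra hne
      obtain ⟨h1, h2⟩ := exps_survive hw j 3 (by norm_num) m hne
      apply h0
      ext k
      by_cases hk : k = j
      · subst hk; simp; omega
      · simp [h1 k hk]
end

section
/- Let u ∈ ℝ[x_1,…,x_d] have total degree at most 4, so that D_i := ∂⁴u/∂x_i⁴ and D_{ij} := ∂⁴u/∂x_i²∂x_j² are constants. Define E = (1/24)·Σ_{i=1}^d D_i·((x_i − c_i)² − h_i²)² + (1/4)·Σ_{1 ≤ i < j ≤ d} D_{ij}·((x_i − c_i)² − h_i²)·((x_j − c_j)² − h_j²). Then: (1) u − E belongs to the Adini shape function space P_A; (2) E(a) = 0 and ∇E(a) = 0 at every vertex a of K. (Hence u − E is the Adini canonical interpolant of u on K, matching u and ∇u at all vertices.) -/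
open MvPolynomial MeasureTheory

namespace AdiniAux

lemma coeff_pderiv' {d : ℕ} (i : Fin d) (p : MvPolynomial (Fin d) ℝ) (m : Fin d →₀ ℕ) :
    coeff m (pderiv i p) = coeff (m + Finsupp.single i 1) p * ((m i : ℝ) + 1) := by
  induction p using MvPolynomial.induction_on' with
  | add p q hp hq => simp only [map_add, coeff_add, hp, hq]; ring
  | monomial a r =>
    rw [pderiv_monomial, coeff_monomial, coeff_monomial]
    by_cases h : a = m + Finsupp.single i 1
    · subst h; simp
    · rw [if_neg h]
      by_cases h2 : a - Finsupp.single i 1 = m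
      · rw [if_pos h2]
        have : a i = 0 := by
          by_contra h0
          apply h
          rw [← h2]
          ext j
          by_cases hj : j = i
          · subst hj; simp; omega
          · simp [Finsupp.single_apply, Ne.symm hj]
        simp [this]
      · simp [h2]

lemma coeff_pow {d : ℕ} (i : Fin d) (k : ℕ) (p : MvPolynomial (Fin d) ℝ) (m : Fin d →₀ ℕ) :
    coeff m ((((pderiv (R := ℝ) i).toLinearMap :
        Module.End ℝ (MvPolynomial (Fin d) ℝ)) ^ k) p) =
      coeff (m + Finsupp.single i k) p * ((m i + 1).ascFactorial k : ℝ) := by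
  induction k generalizing p with
  | zero => simp
  | succ k ih =>
    rw [pow_succ, Module.End.mul_apply, ih]
    simp only [Derivation.coeFn_coe]
    rw [coeff_pderiv', add_assoc, ← Finsupp.single_add, Nat.ascFactorial_succ]
    push_cast
    simp
    ring

lemma coeff_list {d : ℕ} (α : Fin d → ℕ) (L : List (Fin d)) (hL : L.Nodup)
    (p : MvPolynomial (Fin d) ℝ) (m : Fin d →₀ ℕ) (hm : ∀ i ∈ L, m i = 0) :
    coeff m ((L.map fun i => ((pderiv (R := ℝ) i).toLinearMap :
        Module.End ℝ (MvPolynomial (Fin d) ℝ)) ^ α i).prod p) =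
      coeff (m + (L.map fun i => Finsupp.single i (α i)).sum) p *
        (L.map fun i => ((α i).factorial : ℝ)).prod := by
  induction L generalizing m with
  | nil => simp
  | cons i L ih =>
    rw [List.nodup_cons] at hL
    simp only [List.map_cons, List.prod_cons, List.sum_cons, Module.End.mul_apply]
    rw [coeff_pow, ih hL.2, hm i (by simp), zero_add, Nat.one_ascFactorial, add_assoc]
    · ring
    · intro j hj
      have : i ≠ j := fun h => hL.1 (h ▸ hj)
      simp [Finsupp.single_apply, this, hm j (by simp [hj])]

lemma coeff_pderivPow {d : ℕ} (α : Fin d → ℕ) (p : MvPolynomial (Fin d) ℝ) :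
    coeff 0 (pderivPow α p) =
      coeff (∑ i, Finsupp.single i (α i)) p * ∏ i, ((α i).factorial : ℝ) := by
  unfold pderivPow
  rw [List.ofFn_eq_map, coeff_list α _ (List.nodup_finRange d) p 0 (by simp), zero_add,
    ← List.ofFn_eq_map, ← List.ofFn_eq_map, List.sum_ofFn, List.prod_ofFn]

lemma coeff_four {d : ℕ} (u : MvPolynomial (Fin d) ℝ) (i : Fin d) (D : ℝ)
    (h : pderivPow (fun k => if k = i then 4 else 0) u = C D) :
    coeff (Finsupp.single i 4) u = D / 24 := by
  have h1 := coeff_pderivPow (fun k => if k = i then 4 else 0) u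
  rw [h, coeff_C, if_pos rfl] at h1
  have e1 : (∑ k : Fin d, Finsupp.single k (if k = i then 4 else 0)) = Finsupp.single i 4 := by
    rw [Finset.sum_eq_single i] <;> simp +contextual
  have e2 : (∏ k : Fin d, ((if k = i then 4 else 0).factorial : ℝ)) = 24 := by
    rw [Finset.prod_eq_single i] <;> simp +contextual [Nat.factorial]
  rw [e1, e2] at h1
  linarith

lemma coeff_two {d : ℕ} (u : MvPolynomial (Fin d) ℝ) (i j : Fin d) (hij : i ≠ j) (D : ℝ)
    (h : pderivPow (fun k => if k = i then 2 else if k = j then 2 else 0) u = C D) :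
    coeff (Finsupp.single i 2 + Finsupp.single j 2) u = D / 4 := by
  have h1 := coeff_pderivPow (fun k => if k = i then 2 else if k = j then 2 else 0) u
  rw [h, coeff_C, if_pos rfl] at h1
  have e1 : (∑ k : Fin d, Finsupp.single k (if k = i then 2 else if k = j then 2 else 0)) =
      Finsupp.single i 2 + Finsupp.single j 2 := by
    rw [Finset.sum_eq_add i j hij] <;> simp +contextual [hij.symm]
  have e2 : (∏ k : Fin d, ((if k = i then 2 else if k = j then 2 else 0).factorial : ℝ)) = 4 := by
    rw [Finset.prod_eq_mul i j hij] <;> simp +contextual [Nat.factorial, hij.symm]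
    norm_num
  rw [e1, e2] at h1
  linarith

lemma mem_Q1 {d : ℕ} (α : Fin d →₀ ℕ) (r : ℝ) (h : ∀ i, α i ≤ 1) : monomial α r ∈ Q1 d := by
  have : monomial α r = r • monomial α (1 : ℝ) := by simp [smul_monomial]
  rw [this]
  exact Submodule.smul_mem _ _ (Submodule.subset_span ⟨α, h, rfl⟩)

lemma mem_PA {d : ℕ} (α : Fin d →₀ ℕ) (r : ℝ) (i : Fin d) (hi : α i ≤ 3)
    (h : ∀ j, j ≠ i → α j ≤ 1) : monomial α r ∈ PA d := by
  by_cases h1 : α i ≤ 1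
  · apply Submodule.mem_sup_left
    apply mem_Q1
    intro j
    by_cases hj : j = i
    · rw [hj]; exact h1
    · exact h j hj
  · apply Submodule.mem_sup_right
    apply Submodule.subset_span
    refine ⟨i, monomial (α - Finsupp.single i 2) r, mem_Q1 _ _ ?_, ?_⟩
    · intro j
      by_cases hj : j = i
      · subst hj; simp; omega
      · simp [Finsupp.single_apply, Ne.symm hj, h j hj]
    · rw [X_pow_eq_monomial, monomial_mul, one_mul]
      have key : Finsupp.single i 2 + (α - Finsupp.single i 2) = α := by
        ext j
        by_cases hj : j = i
        · subst hj; simp; omega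
        · simp [Ne.symm hj]
      rw [key]

lemma classify {d : ℕ} (hd : 1 ≤ d) (α : Fin d →₀ ℕ) (hα : ∑ i, α i ≤ 4) :
    (∃ i, α i ≤ 3 ∧ ∀ j, j ≠ i → α j ≤ 1) ∨ (∃ i, α = Finsupp.single i 4) ∨
    ∃ i j, i < j ∧ α = Finsupp.single i 2 + Finsupp.single j 2 := by
  by_cases h0 : ∀ i, α i ≤ 1
  · exact Or.inl ⟨⟨0, hd⟩, (h0 _).trans (by norm_num), fun j _ => h0 j⟩
  push Not at h0
  obtain ⟨i, hi⟩ := h0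
  have two : ∀ j, j ≠ i → α i + α j ≤ 4 := fun j hj => by
    have := Finset.sum_le_sum_of_subset (f := α) (Finset.subset_univ {i, j})
    rw [Finset.sum_pair hj.symm] at this
    omega
  have three : ∀ j k, j ≠ i → k ≠ i → k ≠ j → α i + α j + α k ≤ 4 := fun j k hj hk hkj => by
    have := Finset.sum_le_sum_of_subset (f := α) (Finset.subset_univ {i, j, k})
    rw [Finset.sum_insert (by simp [hj.symm, hk.symm]), Finset.sum_pair hkj.symm] at this
    omega
  have one : α i ≤ 4 :=
    (Finset.single_le_sum (f := α) (fun _ _ => Nat.zero_le _) (Finset.mem_univ i)).trans hα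
  by_cases h1 : ∀ j, j ≠ i → α j ≤ 1
  · by_cases h3 : α i ≤ 3
    · exact Or.inl ⟨i, h3, h1⟩
    · refine Or.inr (Or.inl ⟨i, ?_⟩)
      ext j
      by_cases hj : j = i
      · subst hj; simp; omega
      · have := two j hj
        simp [Finsupp.single_apply, Ne.symm hj]; omega
  · push Not at h1
    obtain ⟨j, hj, hj2⟩ := h1
    have key : α = Finsupp.single i 2 + Finsupp.single j 2 := by
      have := two j hj
      ext k
      by_cases hk : k = i
      · subst hk; simp [Finsupp.single_apply, hj]; omega
      · by_cases hkj : k = j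
        · subst hkj; simp [Finsupp.single_apply, Ne.symm hj]; omega
        · have := three j k hj hk hkj
          simp [Finsupp.single_apply, Ne.symm hk, Ne.symm hkj]; omega
    rcases lt_or_gt_of_ne hj with h | h
    · exact Or.inr (Or.inr ⟨j, i, h, by rw [key, add_comm]⟩)
    · exact Or.inr (Or.inr ⟨i, j, h, key⟩)

noncomputable def F {d : ℕ} (Di : Fin d → ℝ) (Dij : Fin d → Fin d → ℝ) :
    MvPolynomial (Fin d) ℝ :=
  (∑ i, monomial (Finsupp.single i 4) (Di i / 24)) +
    ∑ i, ∑ j, if i < j then monomial (Finsupp.single i 2 + Finsupp.single j 2) (Dij i j / 4) else 0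

lemma single_four_ne {d : ℕ} (i j k : Fin d) (hjk : j < k) :
    Finsupp.single j 2 + Finsupp.single k 2 ≠ Finsupp.single i 4 := by
  intro h
  have h1 := DFunLike.congr_fun h j
  have h2 := DFunLike.congr_fun h k
  simp [Finsupp.single_apply, hjk.ne, hjk.ne'] at h1 h2
  split_ifs at h1 h2 <;> omega

lemma pair_inj {d : ℕ} (i j k l : Fin d) (hij : i < j) (hkl : k < l)
    (h : (Finsupp.single k 2 + Finsupp.single l 2 : Fin d →₀ ℕ) =
      Finsupp.single i 2 + Finsupp.single j 2) : k = i ∧ l = j := by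
  have h1 := DFunLike.congr_fun h k
  have h2 := DFunLike.congr_fun h l
  simp [Finsupp.single_apply, hkl.ne, hkl.ne'] at h1 h2
  split_ifs at h1 h2 <;> omega

lemma coeff_F_four {d : ℕ} (Di : Fin d → ℝ) (Dij : Fin d → Fin d → ℝ) (i : Fin d) :
    coeff (Finsupp.single i 4) (F Di Dij) = Di i / 24 := by
  unfold F
  rw [coeff_add, coeff_sum, coeff_sum, Finset.sum_eq_single i, Finset.sum_eq_zero]
  · simp
  · intro j _
    rw [coeff_sum]
    refine Finset.sum_eq_zero fun k _ => ?_
    split_ifs with hjk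
    · rw [coeff_monomial, if_neg (single_four_ne i j k hjk)]
    · simp
  · intro j _ hj
    rw [coeff_monomial, if_neg]
    intro h
    exact hj (Finsupp.single_left_injective (by norm_num) h)
  · simp

lemma coeff_F_two {d : ℕ} (Di : Fin d → ℝ) (Dij : Fin d → Fin d → ℝ) (i j : Fin d)
    (hij : i < j) :
    coeff (Finsupp.single i 2 + Finsupp.single j 2) (F Di Dij) = Dij i j / 4 := by
  unfold F
  rw [coeff_add, coeff_sum, coeff_sum, Finset.sum_eq_zero, Finset.sum_eq_single i, coeff_sum,
    Finset.sum_eq_single j]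
  · simp [hij]
  · intro l _ hl
    split_ifs with h
    · rw [coeff_monomial, if_neg]
      exact fun h' => hl (pair_inj i j i l hij h h').2
    · simp
  · simp
  · intro k _ hk
    rw [coeff_sum]
    refine Finset.sum_eq_zero fun l _ => ?_
    split_ifs with h
    · rw [coeff_monomial, if_neg]
      exact fun h' => hk (pair_inj i j k l hij h h').1
    · simp
  · simp
  · intro k _
    rw [coeff_monomial, if_neg]
    exact fun h => single_four_ne k i j hij h.symm

lemma totalDegree_F {d : ℕ} (Di : Fin d → ℝ) (Dij : Fin d → Fin d → ℝ) :
    (F Di Dij).totalDegree ≤ 4 := by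
  have hs : ∀ (s : Fin d →₀ ℕ) (r : ℝ), s.degree ≤ 4 → (monomial s r).totalDegree ≤ 4 := by
    intro s r h
    exact (totalDegree_monomial_le s r).trans h
  unfold F
  refine (totalDegree_add _ _).trans (max_le ?_ ?_)
  · refine totalDegree_finsetSum_le fun i _ => hs _ _ (by simp)
  · refine totalDegree_finsetSum_le fun i _ => totalDegree_finsetSum_le fun j _ => ?_
    split_ifs
    · exact hs _ _ (by simp)
    · simp

lemma sub_F_mem {d : ℕ} (hd : 1 ≤ d) (u : MvPolynomial (Fin d) ℝ) (hu : u.totalDegree ≤ 4)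
    (Di : Fin d → ℝ) (Dij : Fin d → Fin d → ℝ)
    (h4 : ∀ i, coeff (Finsupp.single i 4) u = Di i / 24)
    (h2 : ∀ i j, i < j → coeff (Finsupp.single i 2 + Finsupp.single j 2) u = Dij i j / 4) :
    u - F Di Dij ∈ PA d := by
  rw [(u - F Di Dij).as_sum]
  refine Submodule.sum_mem _ fun α hα => ?_
  have hdeg : ∑ i, α i ≤ 4 := by
    have h1 := le_totalDegree hα
    rw [Finsupp.sum_fintype _ _ (by simp)] at h1
    exact h1.trans ((totalDegree_sub _ _).trans (max_le hu (totalDegree_F _ _)))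
  rcases classify hd α hdeg with ⟨i, hi, h⟩ | ⟨i, rfl⟩ | ⟨i, j, hij, rfl⟩
  · exact mem_PA _ _ i hi h
  · rw [coeff_sub, h4, coeff_F_four]; simp
  · rw [coeff_sub, h2 _ _ hij, coeff_F_two _ _ _ _ hij]; simp

lemma cub_mem {d : ℕ} (i : Fin d) (k : ℕ) (hk : k ≤ 3) : (X i ^ k : MvPolynomial (Fin d) ℝ) ∈ PA d := by
  rw [X_pow_eq_monomial]
  refine mem_PA _ _ i (by simpa using hk) fun j hj => ?_
  simp [Finsupp.single_apply, Ne.symm hj]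

lemma mix_mem {d : ℕ} (i j : Fin d) (hij : i ≠ j) (k l : ℕ) (hk : k ≤ 3) (hl : l ≤ 1) :
    (X i ^ k * X j ^ l : MvPolynomial (Fin d) ℝ) ∈ PA d := by
  rw [X_pow_eq_monomial, X_pow_eq_monomial, monomial_mul]
  refine mem_PA _ _ i (by simpa [Finsupp.single_apply, hij.symm] using hk) fun m hm => ?_
  simp [Finsupp.single_apply, Ne.symm hm]
  split_ifs <;> omega

lemma quartic_mem {d : ℕ} (i : Fin d) (c e : ℝ) :
    (((X i - C c) ^ 2 - C e) ^ 2 - X i ^ 4 : MvPolynomial (Fin d) ℝ) ∈ PA d := by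
  have : (((X i - C c) ^ 2 - C e) ^ 2 - X i ^ 4 : MvPolynomial (Fin d) ℝ) =
      (-4 * c) • X i ^ 3 + (6 * c ^ 2 - 2 * e) • X i ^ 2 + (4 * c * e - 4 * c ^ 3) • X i ^ 1
        + ((c ^ 2 - e) ^ 2) • X i ^ 0 := by
    simp only [smul_eq_C_mul, C_mul, C_sub, C_pow, C_neg]
    have h4 : (C 4 : MvPolynomial (Fin d) ℝ) = 4 := map_ofNat C 4
    have h6 : (C 6 : MvPolynomial (Fin d) ℝ) = 6 := map_ofNat C 6
    have h2 : (C 2 : MvPolynomial (Fin d) ℝ) = 2 := map_ofNat C 2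
    rw [h4, h6, h2]
    ring
  rw [this]
  refine Submodule.add_mem _ (Submodule.add_mem _ (Submodule.add_mem _ ?_ ?_) ?_) ?_ <;>
  exact Submodule.smul_mem _ _ (cub_mem i _ (by norm_num))

lemma biquad_mem {d : ℕ} (i j : Fin d) (hij : i ≠ j) (a b e f : ℝ) :
    (((X i - C a) ^ 2 - C e) * ((X j - C b) ^ 2 - C f) - X i ^ 2 * X j ^ 2 :
      MvPolynomial (Fin d) ℝ) ∈ PA d := by
  have : (((X i - C a) ^ 2 - C e) * ((X j - C b) ^ 2 - C f) - X i ^ 2 * X j ^ 2 :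
      MvPolynomial (Fin d) ℝ) =
      (-2 * b) • (X i ^ 2 * X j ^ 1) + (b ^ 2 - f) • (X i ^ 2 * X j ^ 0)
      + (-2 * a) • (X j ^ 2 * X i ^ 1) + (a ^ 2 - e) • (X j ^ 2 * X i ^ 0)
      + (4 * a * b) • (X i ^ 1 * X j ^ 1) + (-2 * a * (b ^ 2 - f)) • (X i ^ 1 * X j ^ 0)
      + (-2 * b * (a ^ 2 - e)) • (X j ^ 1 * X i ^ 0)
      + ((a ^ 2 - e) * (b ^ 2 - f)) • (X i ^ 0 * X j ^ 0) := by
    simp only [smul_eq_C_mul, C_mul, C_sub, C_pow, C_neg]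
    have h4 : (C 4 : MvPolynomial (Fin d) ℝ) = 4 := map_ofNat C 4
    have h2 : (C 2 : MvPolynomial (Fin d) ℝ) = 2 := map_ofNat C 2
    rw [h4, h2]
    ring
  rw [this]
  refine Submodule.add_mem _ (Submodule.add_mem _ (Submodule.add_mem _ (Submodule.add_mem _
    (Submodule.add_mem _ (Submodule.add_mem _ (Submodule.add_mem _
      (Submodule.smul_mem _ _ (mix_mem i j hij 2 1 (by norm_num) (by norm_num)))
      (Submodule.smul_mem _ _ (mix_mem i j hij 2 0 (by norm_num) (by norm_num))))
      (Submodule.smul_mem _ _ (mix_mem j i hij.symm 2 1 (by norm_num) (by norm_num))))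
      (Submodule.smul_mem _ _ (mix_mem j i hij.symm 2 0 (by norm_num) (by norm_num))))
      (Submodule.smul_mem _ _ (mix_mem i j hij 1 1 (by norm_num) (by norm_num))))
      (Submodule.smul_mem _ _ (mix_mem i j hij 1 0 (by norm_num) (by norm_num))))
      (Submodule.smul_mem _ _ (mix_mem j i hij.symm 1 0 (by norm_num) (by norm_num))))
      (Submodule.smul_mem _ _ (mix_mem i j hij 0 0 (by norm_num) (by norm_num)))

end AdiniAux

open AdiniAux in
/-- for `u` of total degree at most 4 with constant fourth derivatives
`D_i = ∂⁴u/∂x_i⁴` and `D_{ij} = ∂⁴u/∂x_i²∂x_j²`, the polynomial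
`E = (1/24) Σ_i D_i ((x_i−c_i)²−h_i²)² + (1/4) Σ_{i<j} D_{ij} ((x_i−c_i)²−h_i²)((x_j−c_j)²−h_j²)`
satisfies `u − E ∈ P_A`, and `E` and its gradient vanish at every vertex of `K`. -/
theorem adini_interpolation_remainder (d : ℕ) (hd : 1 ≤ d)
    (c h : Fin d → ℝ) (hh : ∀ i, 0 < h i)
    (u : MvPolynomial (Fin d) ℝ) (hu : u.totalDegree ≤ 4)
    (Di : Fin d → ℝ)
    (hDi : ∀ i, pderivPow (fun k => if k = i then 4 else 0) u = C (Di i))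
    (Dij : Fin d → Fin d → ℝ)
    (hDij : ∀ i j, i ≠ j →
      pderivPow (fun k => if k = i then 2 else if k = j then 2 else 0) u = C (Dij i j))
    (E : MvPolynomial (Fin d) ℝ)
    (hE : E =
      C (1 / 24 : ℝ) * ∑ i, C (Di i) * ((X i - C (c i)) ^ 2 - C (h i ^ 2)) ^ 2 +
      C (1 / 4 : ℝ) * ∑ i, ∑ j,
        if i < j then
          C (Dij i j) * (((X i - C (c i)) ^ 2 - C (h i ^ 2)) *
            ((X j - C (c j)) ^ 2 - C (h j ^ 2)))
        else 0) :
    u - E ∈ PA d ∧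
    ∀ a : Fin d → ℝ, IsVertex c h a →
      eval a E = 0 ∧ ∀ k : Fin d, eval a (pderiv k E) = 0 := by
  constructor
  · have hF := sub_F_mem hd u hu Di Dij (fun i => coeff_four u i _ (hDi i))
      (fun i j hij => coeff_two u i j hij.ne _ (hDij i j hij.ne))
    have hEF : E - F Di Dij ∈ PA d := by
      have : E - F Di Dij =
          (∑ i, (Di i / 24) • (((X i - C (c i)) ^ 2 - C (h i ^ 2)) ^ 2 - X i ^ 4)) +
          ∑ i, ∑ j, if i < j then (Dij i j / 4) • (((X i - C (c i)) ^ 2 - C (h i ^ 2)) *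
            ((X j - C (c j)) ^ 2 - C (h j ^ 2)) - X i ^ 2 * X j ^ 2) else 0 := by
        rw [hE, F, add_sub_add_comm]
        simp only [Finset.mul_sum, ← Finset.sum_sub_distrib]
        congr 1
        · refine Finset.sum_congr rfl fun i _ => ?_
          have e : (monomial (Finsupp.single i 4) (Di i / 24) : MvPolynomial (Fin d) ℝ) =
              C (Di i / 24) * X i ^ 4 := by
            rw [X_pow_eq_monomial, C_mul_monomial, mul_one]
          rw [e, smul_eq_C_mul, show Di i / 24 = 1 / 24 * Di i by ring, C_mul]
          ring
        · refine Finset.sum_congr rfl fun i _ => Finset.sum_congr rfl fun j _ => ?_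
          split_ifs with hij
          · have e : (monomial (Finsupp.single i 2 + Finsupp.single j 2) (Dij i j / 4) :
                MvPolynomial (Fin d) ℝ) = C (Dij i j / 4) * (X i ^ 2 * X j ^ 2) := by
              rw [X_pow_eq_monomial, X_pow_eq_monomial, monomial_mul, C_mul_monomial, mul_one,
                mul_one]
            rw [e, smul_eq_C_mul, show Dij i j / 4 = 1 / 4 * Dij i j by ring, C_mul]
            ring
          · simp
      rw [this]
      refine Submodule.add_mem _ (Submodule.sum_mem _ fun i _ =>
        Submodule.smul_mem _ _ (quartic_mem i _ _))
        (Submodule.sum_mem _ fun i _ => Submodule.sum_mem _ fun j _ => ?_)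
      split_ifs with hij
      · exact Submodule.smul_mem _ _ (biquad_mem i j hij.ne _ _ _ _)
      · exact Submodule.zero_mem _
    have := Submodule.sub_mem _ hF hEF
    simpa using this
  · intro a ha
    have hb : ∀ i, eval a ((X i - C (c i)) ^ 2 - C (h i ^ 2) : MvPolynomial (Fin d) ℝ) = 0 := by
      intro i
      rcases ha i with h1 | h1 <;> simp [h1]
    subst hE
    generalize hB : (fun i => ((X i - C (c i)) ^ 2 - C (h i ^ 2) : MvPolynomial (Fin d) ℝ)) = B
    have hB' : ∀ i, ((X i - C (c i)) ^ 2 - C (h i ^ 2) : MvPolynomial (Fin d) ℝ) = B i :=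
      fun i => congrFun hB i
    simp only [hB'] at hb ⊢
    constructor
    · simp [hb, apply_ite (eval a)]
    · intro k
      simp [hb, apply_ite (eval a), apply_ite (pderiv k), Derivation.leibniz, pow_two]
end
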